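/- Let A and B be completely distributive separated cocomplete V-categories, with left adjoints t_A ⊣ sup_A and t_B ⊣ sup_B, and let q(θ)(a,b) := ⨅_{x,y} [t_A(a)(x) ⊗ t_B(b)(y), θ(x,y)] for presheaves θ on A ⊗ B. Equip A ⊗_V B with sup_⊗(Φ) := q((a,b) ↦ ⨆_{ξ G-ideal} Φ(ξ) ⊗ ξ(a,b)) for presheaves Φ on A ⊗_V B. Then (A ⊗_V B, sup_⊗) is a separated cocomplete V-category, and sup_⊗ admits an enriched left adjoint T : A ⊗_V B → D(A ⊗_V B), i.e. D(A ⊗_V B)(T(ξ), Φ) = (A ⊗_V B)(ξ, sup_⊗(Φ)) for all G-ideals ξ and presheaves Φ on A ⊗_V B. Hence the tensor product of completely distributive cocomplete V-categories is again completely distributive, and the monoidal structure of V-Sup restricts to V-ccd_sup. -/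

import Mathlib

/-!
Write `i(x,y)` for the least G-ideal above the representable presheaf at `(x,y)` and
`θ_Φ(x,y) = ⨆_ζ Φ(ζ) ⊗ ζ(x,y)`.

*Cocompleteness.* Complete distributivity gives `t_A(a) ≤ A(·,a)` and `a ≤ sup (t_A a)`, and likewise
for `B`. The first makes `θ ≤ q(θ)` for every presheaf `θ`; the second shows, together with the
G-ideal equation at `t_A(a)`, `t_B(b)`, that `u ⊗ θ ≤ ζ` implies `u ⊗ q(θ) ≤ ζ` for every
G-ideal `ζ`. Hence `[q(θ_Φ), ζ] = [θ_Φ, ζ] = ⨅_ξ [Φ(ξ), [ξ, ζ]]`.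

*Left adjoint.* G-ideals are closed under infima and under `[v, -]`, so `i(x,y)` is a G-ideal and
`ζ(x,y) ≤ (A ⊗_V B)(i(x,y), ζ)` (`le_tHom_tensorPt`). This yields the key identity
`θ_Φ(x,y) = Φ(i(x,y))` (`iSup_mul_eq_tensorPt`). Therefore `(A ⊗_V B)(ξ, sup_⊗ Φ)` is the infimum
over `a, b, x, y` of `[ξ(a,b) ⊗ t_A(a)(x) ⊗ t_B(b)(y), Φ(i(x,y))]`, and by the Yoneda lemma the left
adjoint is `T(ξ) = ⨆_{a,b,x,y} ξ(a,b) ⊗ t_A(a)(x) ⊗ t_B(b)(y) ⊗ (A ⊗_V B)(·, i(x,y))`.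
-/

/- `V` is a commutative quantale: a complete lattice with a commutative monoid
structure `(*, 1)` distributing over arbitrary suprema. -/
variable {V : Type*} [CommMonoid V] [CompleteLattice V] [IsQuantale V]

/-- The internal hom `[v,w]` of the commutative quantale `V`. -/
def qhom (v w : V) : V := sSup {u | u * v ≤ w}

/-- A separated cocomplete `V`-category: a `V`-category whose underlying order is
antisymmetric, equipped with `sup : DA → A` satisfying
`A(sup φ, a) = ⨅ a', [φ(a'), A(a',a)]`. -/
structure SupCat (V : Type*) [CommMonoid V] [CompleteLattice V] [IsQuantale V] where
  carrier : Type*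
  hom : carrier → carrier → V
  refl : ∀ x, 1 ≤ hom x x
  trans : ∀ x y z, hom x y * hom y z ≤ hom x z
  separated : ∀ x y, 1 ≤ hom x y → 1 ≤ hom y x → x = y
  sup : {φ : carrier → V // ∀ x y, hom x y * φ y ≤ φ x} → carrier
  hom_sup : ∀ (φ : {φ : carrier → V // ∀ x y, hom x y * φ y ≤ φ x}) (a : carrier),
      hom (sup φ) a = ⨅ a', qhom (φ.1 a') (hom a' a)

/-- The set of contravariant presheaves on a separated cocomplete `V`-category. -/
abbrev PSh (A : SupCat V) := {φ : A.carrier → V // ∀ x y, A.hom x y * φ y ≤ φ x}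

/-- A G-ideal on `A ⊗ B`: a presheaf `ξ` on the tensor product `V`-category `A ⊗ B`
such that `⨅_{a,b} [φ(a) ⊗ ψ(b), ξ(a,b)] = ξ(sup_A φ, sup_B ψ)` for all presheaves
`φ` on `A` and `ψ` on `B`. -/
def IsGIdeal (A B : SupCat V) (ξ : A.carrier → B.carrier → V) : Prop :=
  (∀ a a' b b', A.hom a a' * B.hom b b' * ξ a' b' ≤ ξ a b) ∧
  (∀ (φ : PSh A) (ψ : PSh B),
      (⨅ a, ⨅ b, qhom (φ.1 a * ψ.1 b) (ξ a b)) = ξ (A.sup φ) (B.sup ψ))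

/-- The pointwise infimum of all G-ideals above `θ` (the reflection of `θ`
into the tensor product `A ⊗_V B`). -/
def qRefl (A B : SupCat V) (θ : A.carrier → B.carrier → V) :
    A.carrier → B.carrier → V :=
  fun a b => ⨅ ζ ∈ {ζ : A.carrier → B.carrier → V |
      IsGIdeal A B ζ ∧ ∀ a' b', θ a' b' ≤ ζ a' b'}, ζ a b

/-- The tensor product `A ⊗_V B`: the set of all G-ideals on `A ⊗ B`. -/
def GIdT (A B : SupCat V) := {ξ : A.carrier → B.carrier → V // IsGIdeal A B ξ}

/-- The hom of the `V`-category `A ⊗_V B`. -/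
def tHom (A B : SupCat V) (ξ ζ : GIdT A B) : V :=
  ⨅ a, ⨅ b, qhom (ξ.1 a b) (ζ.1 a b)

/-- The universal map `i : A ⊗ B → A ⊗_V B`: the least G-ideal above the
representable presheaf at `(a₀, b₀)`. -/
def iTensor (A B : SupCat V) (a₀ : A.carrier) (b₀ : B.carrier) :
    A.carrier → B.carrier → V :=
  qRefl A B (fun a b => A.hom a a₀ * B.hom b b₀)

theorem le_qhom_iff {u v w : V} : u ≤ qhom v w ↔ u * v ≤ w := by
  constructor
  · intro h
    refine (mul_le_mul_left h v).trans ?_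
    rw [qhom, IsQuantale.sSup_mul_distrib]
    exact iSup₂_le fun _ hu => hu
  · intro h
    exact le_sSup h

theorem mul_iSup_le_iff {ι : Sort*} {u w : V} {f : ι → V} :
    u * (⨆ i, f i) ≤ w ↔ ∀ i, u * f i ≤ w := by
  rw [mul_comm, ← le_qhom_iff, iSup_le_iff]
  simp only [le_qhom_iff, mul_comm]

theorem le_tHom_iff {A B : SupCat V} {ξ ζ : GIdT A B} {u : V} :
    u ≤ tHom A B ξ ζ ↔ ∀ a b, u * ξ.1 a b ≤ ζ.1 a b := by
  simp only [tHom, le_iInf_iff, le_qhom_iff]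

theorem tHom_mul_le {A B : SupCat V} (ξ ζ : GIdT A B) (a : A.carrier) (b : B.carrier) :
    tHom A B ξ ζ * ξ.1 a b ≤ ζ.1 a b :=
  le_tHom_iff.1 le_rfl a b

theorem one_le_tHom {A B : SupCat V} (ξ : GIdT A B) : 1 ≤ tHom A B ξ ξ :=
  le_tHom_iff.2 fun _ _ => (one_mul _).le

theorem tHom_trans {A B : SupCat V} (ξ ζ η : GIdT A B) :
    tHom A B ξ ζ * tHom A B ζ η ≤ tHom A B ξ η := by
  refine le_tHom_iff.2 fun a b => ?_
  rw [mul_comm (tHom A B ξ ζ), mul_assoc]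
  exact (mul_le_mul_right (tHom_mul_le ξ ζ a b) _).trans (tHom_mul_le ζ η a b)

/-- Multiplying by something above the unit only increases. -/
theorem le_mul_of_one_le_quantale {u v : V} (h : 1 ≤ u) : v ≤ u * v :=
  (one_mul v).symm.le.trans (mul_le_mul_left h v)

theorem isGIdeal_qRefl (A B : SupCat V) (θ : A.carrier → B.carrier → V) :
    IsGIdeal A B (qRefl A B θ) := by
  constructor
  · intro a a' b b'
    refine le_iInf₂ fun ζ hζ => ?_
    exact (mul_le_mul_right (iInf₂_le ζ hζ) _).trans (hζ.1.1 a a' b b')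
  · intro φ ψ
    refine eq_of_forall_le_iff fun u => ?_
    simp only [qRefl, le_iInf_iff, le_qhom_iff]
    constructor
    · intro h ζ hζ
      rw [← hζ.1.2 φ ψ]
      simp only [le_iInf_iff, le_qhom_iff]
      exact fun a b => h a b ζ hζ
    · intro h a b ζ hζ
      have := h ζ hζ
      rw [← hζ.1.2 φ ψ] at this
      simp only [le_iInf_iff, le_qhom_iff] at this
      exact this a b

/-- G-ideals are closed under cotensors `[v, -]`. -/
theorem IsGIdeal.qhom {A B : SupCat V} {ζ : A.carrier → B.carrier → V}
    (hζ : IsGIdeal A B ζ) (v : V) : IsGIdeal A B fun a b => qhom v (ζ a b) := by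
  constructor
  · intro a a' b b'
    rw [le_qhom_iff, mul_assoc]
    exact (mul_le_mul_right (le_qhom_iff.1 le_rfl) _).trans (hζ.1 a a' b b')
  · intro φ ψ
    refine eq_of_forall_le_iff fun u => ?_
    rw [le_qhom_iff, ← hζ.2 φ ψ]
    simp only [le_iInf_iff, le_qhom_iff, mul_right_comm u]

/-- The G-ideal `i(x,y)`, i.e. `iTensor` as a point of `A ⊗_V B`. -/
def tensorPt (A B : SupCat V) (x : A.carrier) (y : B.carrier) : GIdT A B :=
  ⟨iTensor A B x y, isGIdeal_qRefl A B _⟩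

theorem one_le_tensorPt (A B : SupCat V) (x : A.carrier) (y : B.carrier) :
    1 ≤ (tensorPt A B x y).1 x y := by
  refine le_iInf₂ fun ζ hζ => le_trans ?_ (hζ.2 x y)
  exact (A.refl x).trans (by
    simpa using mul_le_mul_right (B.refl y) (A.hom x x))

/-- Half of the Yoneda-type identity `(A ⊗_V B)(i(x,y), ζ) = ζ(x,y)`: the cotensor
`[ζ(x,y), ζ]` is a G-ideal above the representable at `(x,y)`, so it lies above `i(x,y)`. -/
theorem le_tHom_tensorPt {A B : SupCat V} (ζ : GIdT A B) (x : A.carrier) (y : B.carrier) :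
    ζ.1 x y ≤ tHom A B (tensorPt A B x y) ζ := by
  refine le_tHom_iff.2 fun a b => ?_
  rw [mul_comm, ← le_qhom_iff]
  refine iInf₂_le (fun a b => qhom (ζ.1 x y) (ζ.1 a b)) ⟨ζ.2.qhom _, fun a' b' => ?_⟩
  exact le_qhom_iff.2 (ζ.2.1 a' x b' y)

/-- The join `⨆_ζ Φ(ζ) ⊗ ζ(x,y)` of a presheaf `Φ` on `A ⊗_V B` is evaluation at `i(x,y)`. -/
theorem iSup_mul_eq_tensorPt {A B : SupCat V} (Φ : GIdT A B → V)
    (hΦ : ∀ ξ ζ : GIdT A B, tHom A B ξ ζ * Φ ζ ≤ Φ ξ) (x : A.carrier) (y : B.carrier) :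
    (⨆ ζ : GIdT A B, Φ ζ * ζ.1 x y) = Φ (tensorPt A B x y) := by
  apply le_antisymm
  · refine iSup_le fun ζ => ?_
    rw [mul_comm]
    exact (mul_le_mul_left (le_tHom_tensorPt ζ x y) _).trans (hΦ _ _)
  · refine le_iSup_of_le (tensorPt A B x y) ?_
    rw [mul_comm]
    exact le_mul_of_one_le_quantale (one_le_tensorPt A B x y)

/-- `t(a) ≤ A(·,a)`: transpose `a ≤ sup (y a)`. -/
theorem t_le_hom {A : SupCat V} {tA : A.carrier → PSh A}
    (htA : ∀ (a : A.carrier) (φ : PSh A),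
      (⨅ x, qhom ((tA a).1 x) (φ.1 x)) = A.hom a (A.sup φ)) (a x : A.carrier) :
    (tA a).1 x ≤ A.hom x a := by
  let ya : PSh A := ⟨fun x => A.hom x a, fun x y => A.trans x y a⟩
  -- the unit inequality `a ≤ sup (y a)` comes from `A(sup (y a), sup (y a)) ≥ 1`
  have h : 1 ≤ A.hom a (A.sup ya) := by
    have h1 := A.refl (A.sup ya)
    rw [A.hom_sup, le_iInf_iff] at h1
    have h2 := le_qhom_iff.1 (h1 a)
    rw [one_mul] at h2
    exact (A.refl a).trans h2
  rw [← htA, le_iInf_iff] at h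
  simpa [le_qhom_iff, ya] using h x

theorem one_le_hom_sup_t {A : SupCat V} {tA : A.carrier → PSh A}
    (htA : ∀ (a : A.carrier) (φ : PSh A),
      (⨅ x, qhom ((tA a).1 x) (φ.1 x)) = A.hom a (A.sup φ)) (a : A.carrier) :
    1 ≤ A.hom a (A.sup (tA a)) := by
  rw [← htA]
  exact le_iInf fun x => le_qhom_iff.2 (one_mul _).le

/-- For completely distributive `A`, `B`, the tensor product
`A ⊗_V B`, equipped with `sup_⊗(Φ) := q((a,b) ↦ ⨆_ξ Φ(ξ) ⊗ ξ(a,b))` where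
`q(θ)(a,b) = ⨅_{x,y} [t_A(a)(x) ⊗ t_B(b)(y), θ(x,y)]`, is a separated cocomplete
`V`-category whose `sup_⊗` admits an enriched left adjoint; hence the tensor
product of completely distributive cocomplete `V`-categories is again completely
distributive. -/
theorem stmt15 (A B : SupCat V)
    (tA : A.carrier → PSh A)
    (htA : ∀ (a : A.carrier) (φ : PSh A),
        (⨅ x, qhom ((tA a).1 x) (φ.1 x)) = A.hom a (A.sup φ))
    (tB : B.carrier → PSh B)
    (htB : ∀ (b : B.carrier) (ψ : PSh B),
        (⨅ y, qhom ((tB b).1 y) (ψ.1 y)) = B.hom b (B.sup ψ))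
    (supT : {F : GIdT A B → V // ∀ ξ ζ : GIdT A B, tHom A B ξ ζ * F ζ ≤ F ξ} → GIdT A B)
    (hsupT : ∀ Φ, (supT Φ).1 = fun a b => ⨅ x, ⨅ y,
        qhom ((tA a).1 x * (tB b).1 y) (⨆ ξ : GIdT A B, Φ.1 ξ * ξ.1 x y)) :
    -- (A ⊗_V B, sup_⊗) is a cocomplete V-category
    (∀ (Φ : {F : GIdT A B → V // ∀ ξ ζ : GIdT A B, tHom A B ξ ζ * F ζ ≤ F ξ})
        (ζ : GIdT A B),
        tHom A B (supT Φ) ζ = ⨅ ξ : GIdT A B, qhom (Φ.1 ξ) (tHom A B ξ ζ)) ∧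
    -- (A ⊗_V B, sup_⊗) is separated
    (∀ ξ ζ : GIdT A B, 1 ≤ tHom A B ξ ζ → 1 ≤ tHom A B ζ ξ → ξ = ζ) ∧
    -- sup_⊗ admits an enriched left adjoint T, so A ⊗_V B is completely distributive
    (∃ T : GIdT A B → {F : GIdT A B → V // ∀ ξ ζ : GIdT A B, tHom A B ξ ζ * F ζ ≤ F ξ},
        ∀ (ξ : GIdT A B)
          (Φ : {F : GIdT A B → V // ∀ ξ ζ : GIdT A B, tHom A B ξ ζ * F ζ ≤ F ξ}),
          (⨅ ζ : GIdT A B, qhom ((T ξ).1 ζ) (Φ.1 ζ)) = tHom A B ξ (supT Φ)) := by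
  refine ⟨?_, ?_, ?_⟩
  · intro Φ ζ
    refine eq_of_forall_le_iff fun u => ?_
    rw [le_tHom_iff]
    simp only [hsupT, iSup_mul_eq_tensorPt Φ.1 Φ.2, le_iInf_iff, le_qhom_iff, le_tHom_iff]
    constructor
    · intro h ξ a b
      refine le_trans ?_ (h a b)
      rw [mul_assoc]
      refine mul_le_mul_right ?_ u
      refine le_iInf₂ fun x y => le_qhom_iff.2 ?_
      rw [← iSup_mul_eq_tensorPt Φ.1 Φ.2]
      refine le_iSup_of_le ξ ?_
      rw [mul_assoc, mul_comm (ξ.1 a b)]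
      refine mul_le_mul_right (le_trans ?_ (ξ.2.1 x a y b)) _
      exact mul_le_mul_left (mul_le_mul' (t_le_hom htA a x) (t_le_hom htB b y)) _
    · intro h a b
      -- it suffices to reach `ζ (sup (t a)) (sup (t b))`, since `a ≤ sup (t a)` and `b ≤ sup (t b)`
      have hζ : ζ.1 (A.sup (tA a)) (B.sup (tB b)) ≤ ζ.1 a b := by
        refine le_trans ?_ (ζ.2.1 a (A.sup (tA a)) b (B.sup (tB b)))
        rw [mul_assoc]
        exact (le_mul_of_one_le_quantale (one_le_hom_sup_t htB b)).trans
          (le_mul_of_one_le_quantale (one_le_hom_sup_t htA a))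
      refine le_trans ?_ hζ
      rw [← ζ.2.2]
      refine le_iInf₂ fun x y => le_qhom_iff.2 ?_
      rw [mul_assoc]
      refine (mul_le_mul_right (le_qhom_iff.1 ((iInf_le _ x).trans (iInf_le _ y))) u).trans ?_
      refine le_trans ?_ (h (tensorPt A B x y) x y)
      rw [mul_comm _ ((tensorPt A B x y).1 x y)]
      exact le_mul_of_one_le_quantale (one_le_tensorPt A B x y)
  · intro ξ ζ h h'
    refine Subtype.ext (funext fun a => funext fun b => le_antisymm ?_ ?_)
    · simpa using le_tHom_iff.1 h a b
    · simpa using le_tHom_iff.1 h' a b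
  · refine ⟨fun ξ => ⟨fun ζ => ⨆ a, ⨆ b, ⨆ x, ⨆ y,
      ξ.1 a b * ((tA a).1 x * (tB b).1 y) * tHom A B ζ (tensorPt A B x y), ?_⟩, ?_⟩
    · intro ζ η
      simp only [mul_iSup_le_iff]
      intro a b x y
      refine le_iSup_of_le a (le_iSup_of_le b (le_iSup_of_le x (le_iSup_of_le y ?_)))
      rw [mul_left_comm]
      exact mul_le_mul_right (tHom_trans _ _ _) _
    · intro ξ Φ
      refine eq_of_forall_le_iff fun u => ?_
      simp only [le_tHom_iff, hsupT, iSup_mul_eq_tensorPt Φ.1 Φ.2, le_iInf_iff, le_qhom_iff,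
        mul_iSup_le_iff]
      constructor
      · intro h a b x y
        refine le_trans ?_ (h (tensorPt A B x y) a b x y)
        rw [← mul_assoc u, ← mul_assoc u, mul_comm _ (tHom A B _ _)]
        exact le_mul_of_one_le_quantale (one_le_tHom _)
      · intro h ζ a b x y
        refine le_trans ?_ (Φ.2 ζ (tensorPt A B x y))
        rw [← mul_assoc u, ← mul_assoc u, mul_comm _ (tHom A B _ _)]
        exact mul_le_mul_right (h a b x y) _
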